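/- (Evans–Krylov Liouville theorem) Let n ≥ 2 and let F be a smooth real-valued function on the n×n real symmetric matrices such that at every symmetric matrix M the derivative matrix DF(M) = (∂F/∂M_{ij}(M)) is positive definite, and such that the set {M symmetric : F(M) ≥ 0} is convex. Let u : ℝⁿ → ℝ be a smooth function with sup_{x ∈ ℝⁿ} ‖D²u(x)‖ < ∞ and F(D²u(x)) = 0 for all x ∈ ℝⁿ. Then u is a quadratic polynomial. -/

import Mathlib

open Real

/-- Second partial derivative matrix (Hessian) of `u` at `x`. -/
noncomputable def hessianMatrix {n : ℕ} (u : EuclideanSpace ℝ (Fin n) → ℝ)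
    (x : EuclideanSpace ℝ (Fin n)) : Matrix (Fin n) (Fin n) ℝ :=
  Matrix.of fun i j =>
    fderiv ℝ (fun y => fderiv ℝ u y (EuclideanSpace.single j 1)) x (EuclideanSpace.single i 1)

/-- The derivative matrix `DF(M) = (∂F/∂M_{ij}(M))` of a function `F` of matrices. -/
noncomputable def derivMatrix {n : ℕ} (F : (Fin n → Fin n → ℝ) → ℝ)
    (M : Fin n → Fin n → ℝ) : Matrix (Fin n) (Fin n) ℝ :=
  Matrix.of fun i j => fderiv ℝ F M (Pi.single i (Pi.single j (1 : ℝ)))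

/-- `u` is a quadratic polynomial. -/
def IsQuadraticPoly {n : ℕ} (u : EuclideanSpace ℝ (Fin n) → ℝ) : Prop :=
  ∃ (A : Matrix (Fin n) (Fin n) ℝ) (b : Fin n → ℝ) (c : ℝ), A.IsSymm ∧
    ∀ x, u x = (1/2) * (∑ i, ∑ j, A i j * x i * x j) + (∑ i, b i * x i) + c

/-- directional derivative -/
noncomputable def Dd {n : ℕ} (v : EuclideanSpace ℝ (Fin n)) (f : EuclideanSpace ℝ (Fin n) → ℝ) :
    EuclideanSpace ℝ (Fin n) → ℝ := fun x => fderiv ℝ f x v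

/-- basis vector -/
noncomputable def bv {n : ℕ} (i : Fin n) : EuclideanSpace ℝ (Fin n) := EuclideanSpace.single i 1

lemma Dd_smooth {n : ℕ} (v : EuclideanSpace ℝ (Fin n)) {f : EuclideanSpace ℝ (Fin n) → ℝ}
    (hf : ContDiff ℝ (⊤ : ℕ∞) f) : ContDiff ℝ (⊤ : ℕ∞) (Dd v f) := by
  have h : ContDiff ℝ (⊤ : ℕ∞) (fderiv ℝ f) := hf.fderiv_right (by simp)
  exact h.clm_apply contDiff_const

lemma smooth_diff {n : ℕ} {f : EuclideanSpace ℝ (Fin n) → ℝ}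
    (hf : ContDiff ℝ (⊤ : ℕ∞) f) : Differentiable ℝ f := hf.differentiable (by simp)

lemma Dd_Dd_eq {n : ℕ} (v w : EuclideanSpace ℝ (Fin n)) {f : EuclideanSpace ℝ (Fin n) → ℝ}
    (hf : ContDiff ℝ (⊤ : ℕ∞) f) (x) : Dd v (Dd w f) x = fderiv ℝ (fderiv ℝ f) x v w := by
  have h : ContDiff ℝ (⊤ : ℕ∞) (fderiv ℝ f) := hf.fderiv_right (by simp)
  have h1 : DifferentiableAt ℝ (fderiv ℝ f) x := (h.differentiable (by simp)) x
  unfold Dd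
  rw [fderiv_clm_apply h1 (by fun_prop)]
  simp

lemma Dd_comm {n : ℕ} (v w : EuclideanSpace ℝ (Fin n)) {f : EuclideanSpace ℝ (Fin n) → ℝ}
    (hf : ContDiff ℝ (⊤ : ℕ∞) f) : Dd v (Dd w f) = Dd w (Dd v f) := by
  ext x
  rw [Dd_Dd_eq v w hf, Dd_Dd_eq w v hf]
  have h : ContDiff ℝ (⊤ : ℕ∞) (fderiv ℝ f) := hf.fderiv_right (by simp)
  exact second_derivative_symmetric (fun y => (smooth_diff hf y).hasFDerivAt)
    ((h.differentiable (by simp)) x).hasFDerivAt v w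

lemma vec_eq_sum {n : ℕ} (v : EuclideanSpace ℝ (Fin n)) : v = ∑ i, v i • bv i := by
  ext j
  simp [bv, Finset.sum_apply, Pi.single_apply]

lemma Dd_eq_sum {n : ℕ} (v : EuclideanSpace ℝ (Fin n)) (f : EuclideanSpace ℝ (Fin n) → ℝ) (x) :
    Dd v f x = ∑ i, v i * Dd (bv i) f x := by
  unfold Dd
  conv_lhs => rw [vec_eq_sum v]
  simp [map_sum]

lemma Dd2_eq_sum {n : ℕ} (v w : EuclideanSpace ℝ (Fin n)) {f : EuclideanSpace ℝ (Fin n) → ℝ}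
    (hf : ContDiff ℝ (⊤ : ℕ∞) f) (x) :
    Dd v (Dd w f) x = ∑ i, ∑ j, v i * w j * Dd (bv i) (Dd (bv j) f) x := by
  rw [Dd_eq_sum]
  refine Finset.sum_congr rfl fun i _ => ?_
  rw [Dd_comm _ _ hf, Dd_eq_sum, Finset.mul_sum]
  refine Finset.sum_congr rfl fun j _ => ?_
  rw [Dd_comm (bv j) _ hf]; ring

lemma line_deriv {n : ℕ} (x v : EuclideanSpace ℝ (Fin n)) {f : EuclideanSpace ℝ (Fin n) → ℝ}
    (hf : ContDiff ℝ (⊤ : ℕ∞) f) :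
    deriv (fun t : ℝ => f (x + t • v)) = fun t => Dd v f (x + t • v) := by
  ext t
  have h1 : HasDerivAt (fun t : ℝ => x + t • v) v t := by
    simpa using ((hasDerivAt_id t).smul_const v).const_add x
  exact ((smooth_diff hf _).hasFDerivAt.comp_hasDerivAt t h1).deriv

lemma min_test {n : ℕ} {g : EuclideanSpace ℝ (Fin n) → ℝ} (hg : ContDiff ℝ (⊤ : ℕ∞) g)
    {x : EuclideanSpace ℝ (Fin n)} (hmin : ∀ y, g x ≤ g y) (v : EuclideanSpace ℝ (Fin n)) :
    Dd v g x = 0 ∧ 0 ≤ Dd v (Dd v g) x := by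
  have h1 : fderiv ℝ g x = 0 :=
    IsLocalMin.fderiv_eq_zero (Filter.Eventually.of_forall hmin)
  have h0 : Dd v g x = 0 := by simp [Dd, h1]
  refine ⟨h0, ?_⟩
  by_contra! hlt
  set φ : ℝ → ℝ := fun t => g (x + t • v) with hφ
  have d1 : deriv φ = fun t => Dd v g (x + t • v) := line_deriv x v hg
  have d2 : deriv (deriv φ) = fun t => Dd v (Dd v g) (x + t • v) := by
    rw [d1]; exact line_deriv x v (Dd_smooth v hg)
  have hc : Continuous φ := by
    have := hg.continuous
    fun_prop
  have hmax : IsLocalMax φ 0 := isLocalMax_of_deriv_deriv_neg (by rw [d2]; simpa using hlt)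
    (by rw [d1]; simpa using h0) hc.continuousAt
  have heq : φ =ᶠ[nhds 0] fun _ => φ 0 := by
    filter_upwards [hmax] with t ht
    exact le_antisymm ht (by simpa [hφ] using hmin (x + t • v))
  have h3 : deriv φ =ᶠ[nhds 0] deriv (fun _ => φ 0) := heq.deriv
  have h4 := h3.deriv_eq
  rw [d2] at h4
  simp at h4
  linarith

lemma Dd_log {n : ℕ} {w : EuclideanSpace ℝ (Fin n) → ℝ} (hw : ContDiff ℝ (⊤ : ℕ∞) w)
    (hpos : ∀ x, 0 < w x) (v : EuclideanSpace ℝ (Fin n)) :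
    Dd v (fun x => Real.log (w x)) = fun x => Dd v w x * (w x)⁻¹ := by
  ext x
  have := ((smooth_diff hw x).hasFDerivAt.log (hpos x).ne').fderiv
  simp [Dd, this, mul_comm]

lemma Dd2_log {n : ℕ} {w : EuclideanSpace ℝ (Fin n) → ℝ} (hw : ContDiff ℝ (⊤ : ℕ∞) w)
    (hpos : ∀ x, 0 < w x) (v v' x : EuclideanSpace ℝ (Fin n)) :
    Dd v' (Dd v (fun x => Real.log (w x))) x =
      Dd v' (Dd v w) x * (w x)⁻¹ - (Dd v w x * (w x)⁻¹) * (Dd v' w x * (w x)⁻¹) := by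
  rw [Dd_log hw hpos]
  have h1 := (smooth_diff (Dd_smooth v hw) x).hasFDerivAt
  have h2 := (smooth_diff hw x).hasFDerivAt
  have h3 : HasFDerivAt (fun y => (w y)⁻¹) (-((w x)^2)⁻¹ • fderiv ℝ w x) x := by
    exact (hasDerivAt_inv (hpos x).ne').comp_hasFDerivAt x h2
  have := (h1.mul h3).fderiv
  simp only [Dd] at this ⊢
  erw [this]
  have := (hpos x).ne'
  simp
  field_simp
  ring

lemma Dd_add {n : ℕ} {f g : EuclideanSpace ℝ (Fin n) → ℝ} (hf : ContDiff ℝ (⊤ : ℕ∞) f)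
    (hg : ContDiff ℝ (⊤ : ℕ∞) g) (v) : Dd v (fun x => f x + g x) = fun x => Dd v f x + Dd v g x := by
  ext x
  simp only [Dd]
  rw [fderiv_fun_add (smooth_diff hf x) (smooth_diff hg x)]; simp

lemma Dd_const_sub {n : ℕ} (f : EuclideanSpace ℝ (Fin n) → ℝ) (c : ℝ)
    (v) : Dd v (fun x => c - f x) = fun x => - Dd v f x := by
  ext x
  simp only [Dd]
  rw [fderiv_const_sub]; simp

lemma Dd_neg {n : ℕ} (f : EuclideanSpace ℝ (Fin n) → ℝ)
    (v) : Dd v (fun x => - f x) = fun x => - Dd v f x := by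
  ext x
  simp [Dd, fderiv_fun_neg]

lemma Dd_quad {n : ℕ} (β : ℝ) (y v : EuclideanSpace ℝ (Fin n)) :
    Dd v (fun x => β * ‖x - y‖ ^ 2) = fun x => 2 * β * inner ℝ (x - y) v := by
  ext x
  have h : HasFDerivAt (fun x => x - y) (ContinuousLinearMap.id ℝ (EuclideanSpace ℝ (Fin n))) x :=
    (hasFDerivAt_id x).sub_const y
  have := (h.norm_sq.const_mul β).fderiv
  simp only [Dd, this]
  simp [inner_sub_left]; ring

lemma Dd_inner {n : ℕ} (c : ℝ) (y v v' : EuclideanSpace ℝ (Fin n)) (x) :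
    Dd v' (fun x => c * inner ℝ (x - y) v) x = c * inner ℝ v' v := by
  have h : HasFDerivAt (fun x => x - y) (ContinuousLinearMap.id ℝ (EuclideanSpace ℝ (Fin n))) x :=
    (hasFDerivAt_id x).sub_const y
  have := ((h.inner ℝ (hasFDerivAt_const v x)).const_mul c).fderiv
  simp only [Dd, this]
  simp

open scoped MatrixOrder in
lemma psd_trace_mul_nonneg {n : ℕ} {A P : Matrix (Fin n) (Fin n) ℝ} (hA : A.PosSemidef)
    (hP : P.PosSemidef) : 0 ≤ (A * P).trace := by
  obtain ⟨B, hB⟩ := CStarAlgebra.nonneg_iff_eq_star_mul_self.mp hP.nonneg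
  rw [hB, ← mul_assoc, Matrix.trace_mul_comm, ← mul_assoc]
  exact (hA.mul_mul_conjTranspose_same B).trace_nonneg

lemma lam_trace_le {n : ℕ} {A P : Matrix (Fin n) (Fin n) ℝ} {lam : ℝ}
    (hA : (A - lam • (1 : Matrix (Fin n) (Fin n) ℝ)).PosSemidef)
    (hP : P.PosSemidef) : lam * P.trace ≤ (A * P).trace := by
  have := psd_trace_mul_nonneg hA hP
  rw [sub_mul, Matrix.trace_sub] at this
  simp at this
  linarith

lemma psd_det_le {n : ℕ} {P : Matrix (Fin n) (Fin n) ℝ} (hP : P.PosSemidef) :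
    |P.det| ≤ P.trace ^ n := by
  rw [hP.1.det_eq_prod_eigenvalues, hP.1.trace_eq_sum_eigenvalues]
  simp only [RCLike.ofReal_real_eq_id, id]
  rw [abs_of_nonneg (Finset.prod_nonneg fun i _ => hP.eigenvalues_nonneg i)]
  calc ∏ i, hP.1.eigenvalues i ≤ ∏ _i : Fin n, ∑ i, hP.1.eigenvalues i := by
        apply Finset.prod_le_prod
        · intro i _; exact hP.eigenvalues_nonneg i
        · intro i _
          exact Finset.single_le_sum (f := hP.1.eigenvalues)
            (fun j _ => hP.eigenvalues_nonneg j) (Finset.mem_univ i)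
    _ = _ := by simp

lemma det_toEuclideanCLM {n : ℕ} (P : Matrix (Fin n) (Fin n) ℝ) :
    (Matrix.toEuclideanCLM (𝕜 := ℝ) P).det = P.det := by
  unfold ContinuousLinearMap.det
  rw [Matrix.coe_toEuclideanCLM_eq_toEuclideanLin]
  rw [show Matrix.toEuclideanLin P = Matrix.toLin (PiLp.basisFun 2 ℝ (Fin n))
    (PiLp.basisFun 2 ℝ (Fin n)) P from by rw [← Matrix.toLpLin_eq_toLin]]
  exact LinearMap.det_toLin _ _

/-- Positive supersolutions of a uniformly elliptic linear equation. -/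
structure IsSuper {n : ℕ} (lam Lam : ℝ) (a : EuclideanSpace ℝ (Fin n) → Matrix (Fin n) (Fin n) ℝ)
    (w : EuclideanSpace ℝ (Fin n) → ℝ) : Prop where
  lam_pos : 0 < lam
  Lam_pos : 0 < Lam
  smooth : ContDiff ℝ (⊤ : ℕ∞) w
  ell : ∀ x, (a x - lam • (1 : Matrix (Fin n) (Fin n) ℝ)).PosSemidef
  tr : ∀ x, (a x).trace ≤ Lam
  super : ∀ x, ∑ i, ∑ j, a x i j * Dd (bv i) (Dd (bv j) w) x ≤ 0
  pos : ∃ ε, 0 < ε ∧ ∀ x, ε ≤ w x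

/-- Jacobian matrix of the contact map. -/
noncomputable def jac {n : ℕ} (β : ℝ) (v : EuclideanSpace ℝ (Fin n) → ℝ)
    (x : EuclideanSpace ℝ (Fin n)) : Matrix (Fin n) (Fin n) ℝ :=
  Matrix.of fun i j => (if i = j then 1 else 0) + (2 * β)⁻¹ * Dd (bv j) (Dd (bv i) v) x

/-- contact map -/
noncomputable def cmap {n : ℕ} (β : ℝ) (v : EuclideanSpace ℝ (Fin n) → ℝ)
    (x : EuclideanSpace ℝ (Fin n)) : EuclideanSpace ℝ (Fin n) :=
  WithLp.toLp 2 fun i => x i + (2 * β)⁻¹ * Dd (bv i) v x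

lemma cmap_hasFDerivAt {n : ℕ} (β : ℝ) {v : EuclideanSpace ℝ (Fin n) → ℝ}
    (hv : ContDiff ℝ (⊤ : ℕ∞) v) (x) :
    HasFDerivAt (cmap β v) (Matrix.toEuclideanCLM (𝕜 := ℝ) (jac β v x)) x := by
  rw [← hasFDerivWithinAt_univ, hasFDerivWithinAt_euclidean]
  intro i
  rw [hasFDerivWithinAt_univ]
  have h1 := (smooth_diff (Dd_smooth (bv i) hv) x).hasFDerivAt.const_mul ((2 * β)⁻¹)
  have h2 : HasFDerivAt (fun y : EuclideanSpace ℝ (Fin n) => y i) (PiLp.proj 2 (fun _ => ℝ) i) x :=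
    PiLp.hasFDerivAt_apply (𝕜 := ℝ) 2 x i
  have e : PiLp.proj 2 (fun _ => ℝ) i ∘L Matrix.toEuclideanCLM (𝕜 := ℝ) (jac β v x) =
      PiLp.proj 2 (fun _ => ℝ) i + (2 * β)⁻¹ • fderiv ℝ (Dd (bv i) v) x := by
    ext1 ξ
    have := Dd_eq_sum ξ (Dd (bv i) v) x
    simp only [ContinuousLinearMap.comp_apply, add_apply, PiLp.proj_apply,
      smul_apply, Matrix.ofLp_toEuclideanCLM, smul_eq_mul]
    rw [show (fderiv ℝ (Dd (bv i) v) x) ξ = Dd ξ (Dd (bv i) v) x from rfl, this]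
    simp only [Matrix.mulVec, dotProduct, jac, Matrix.of_apply, add_mul, Finset.sum_add_distrib,
      Finset.mul_sum]
    congr 1
    · simp
    · exact Finset.sum_congr rfl fun j _ => by ring
  have h3 := h2.add h1
  rw [← e] at h3
  exact h3

lemma contact {n : ℕ} {lam Lam : ℝ} {a : EuclideanSpace ℝ (Fin n) → Matrix (Fin n) (Fin n) ℝ}
    {w : EuclideanSpace ℝ (Fin n) → ℝ} (h : IsSuper lam Lam a w) {β : ℝ} (hβ : 0 < β)
    {x y : EuclideanSpace ℝ (Fin n)}
    (hmin : ∀ x', Real.log (w x) + β * ‖x - y‖ ^ 2 ≤ Real.log (w x') + β * ‖x' - y‖ ^ 2) :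
    2 * β * lam * ‖x - y‖ ^ 2 ≤ Lam ∧ |(jac β (fun x => Real.log (w x)) x).det| ≤ (Lam / lam) ^ n ∧
      cmap β (fun x => Real.log (w x)) x = y := by
  obtain ⟨ε, hε, hwε⟩ := h.pos
  have hpos : ∀ x, 0 < w x := fun x => hε.trans_le (hwε x)
  have hl := h.lam_pos
  set v : EuclideanSpace ℝ (Fin n) → ℝ := fun x => Real.log (w x) with hvdef
  have hv : ContDiff ℝ (⊤ : ℕ∞) v := h.smooth.log (fun x => (hpos x).ne')
  have hq : ContDiff ℝ (⊤ : ℕ∞) (fun x' : EuclideanSpace ℝ (Fin n) => β * ‖x' - y‖ ^ 2) :=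
    contDiff_const.mul ((contDiff_id.sub contDiff_const).norm_sq ℝ)
  have hg := hv.add hq
  have key := min_test hg hmin
  have grad : ∀ ξ, Dd ξ v x = - (2 * β * inner ℝ (x - y) ξ) := by
    intro ξ
    have := (key ξ).1
    rw [Dd_add hv hq, Dd_quad] at this
    linarith
  have hess : ∀ ξ, 0 ≤ Dd ξ (Dd ξ v) x + 2 * β * inner ℝ ξ ξ := by
    intro ξ
    have := (key ξ).2
    rw [Dd_add hv hq, Dd_quad, Dd_add (Dd_smooth ξ hv)] at this
    · have e := Dd_inner (2 * β) y ξ ξ x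
      simp only at this
      rwa [e] at this
    · exact contDiff_const.mul ((contDiff_id.sub contDiff_const).inner ℝ contDiff_const)
  have grad_i : ∀ i, Dd (bv i) v x = - (2 * β * (x - y) i) := by
    intro i
    rw [grad]
    simp [bv, EuclideanSpace.inner_single_right]
  set P := jac β v x with hP
  have hPsd : P.PosSemidef := by
    apply Matrix.PosSemidef.of_dotProduct_mulVec_nonneg
    · ext i j
      simp only [hP, jac, Matrix.conjTranspose_apply, Matrix.of_apply, star_trivial]
      rw [Dd_comm _ _ hv]
      simp [eq_comm]
    · intro ξ
      have h1 := hess (WithLp.toLp 2 ξ)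
      rw [Dd2_eq_sum _ _ hv] at h1
      have : star ξ ⬝ᵥ P.mulVec ξ = (2 * β)⁻¹ * (∑ i, ∑ j, ξ i * ξ j * Dd (bv i) (Dd (bv j) v) x
          + 2 * β * inner ℝ (WithLp.toLp 2 ξ) (WithLp.toLp 2 ξ)) := by
        have h2 : inner ℝ (WithLp.toLp 2 ξ) (WithLp.toLp 2 ξ) = ∑ i, ξ i * ξ i := by
          rw [PiLp.inner_apply]; simp [sq]
        rw [h2, mul_add, ← mul_assoc, inv_mul_cancel₀ (by positivity), one_mul]
        simp only [hP, dotProduct, Matrix.mulVec, jac, Matrix.of_apply, star_trivial]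
        simp only [add_mul, Finset.sum_add_distrib, mul_add, Finset.mul_sum]
        rw [add_comm]
        congr 1
        · refine Finset.sum_congr rfl fun i _ => Finset.sum_congr rfl fun j _ => ?_
          rw [Dd_comm _ _ hv]
          ring
        · simp
      rw [this]
      exact mul_nonneg (by positivity) h1
  have htr : (a x * P).trace ≤ Lam - 2 * β * lam * ‖x - y‖ ^ 2 := by
    have e1 : (a x * P).trace = (a x).trace + (2 * β)⁻¹ *
        ((∑ i, ∑ j, a x i j * Dd (bv i) (Dd (bv j) w) x) * (w x)⁻¹
        - ∑ i, ∑ j, (a x i j) * Dd (bv j) v x * Dd (bv i) v x) := by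
      simp only [Matrix.trace, Matrix.diag, Matrix.mul_apply, hP, jac, Matrix.of_apply, mul_add,
        Finset.sum_add_distrib]
      congr 1
      · simp
      · rw [Finset.sum_mul, ← Finset.sum_sub_distrib, Finset.mul_sum]
        refine Finset.sum_congr rfl fun i _ => ?_
        rw [Finset.sum_mul, ← Finset.sum_sub_distrib, Finset.mul_sum]
        refine Finset.sum_congr rfl fun j _ => ?_
        rw [hvdef, Dd2_log h.smooth hpos, Dd_log h.smooth hpos, Dd_log h.smooth hpos]
        ring
    have e2 : lam * ∑ i, (Dd (bv i) v x) ^ 2 ≤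
        ∑ i, ∑ j, (a x i j) * Dd (bv j) v x * Dd (bv i) v x := by
      have := (h.ell x).dotProduct_mulVec_nonneg (fun i => Dd (bv i) v x)
      rw [Matrix.sub_mulVec, Matrix.smul_mulVec, Matrix.one_mulVec, dotProduct_sub] at this
      simp only [dotProduct, Matrix.mulVec, star_trivial, Pi.smul_apply, smul_eq_mul,
        Pi.star_apply] at this
      have e3 : ∑ i, Dd (bv i) v x * (lam * Dd (bv i) v x) = lam * ∑ i, (Dd (bv i) v x) ^ 2 := by
        rw [Finset.mul_sum]; exact Finset.sum_congr rfl fun i _ => by ring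
      have e4 : ∑ i, Dd (bv i) v x * ∑ j, a x i j * Dd (bv j) v x =
          ∑ i, ∑ j, (a x i j) * Dd (bv j) v x * Dd (bv i) v x := by
        refine Finset.sum_congr rfl fun i _ => ?_
        rw [Finset.mul_sum]; exact Finset.sum_congr rfl fun j _ => by ring
      linarith
    have e5 : ∑ i, (Dd (bv i) v x) ^ 2 = (2 * β) ^ 2 * ‖x - y‖ ^ 2 := by
      rw [EuclideanSpace.norm_sq_eq, Finset.mul_sum]
      refine Finset.sum_congr rfl fun i _ => ?_
      rw [grad_i, Real.norm_eq_abs, sq_abs]; ring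
    have e6 : (∑ i, ∑ j, a x i j * Dd (bv i) (Dd (bv j) w) x) * (w x)⁻¹ ≤ 0 :=
      mul_nonpos_of_nonpos_of_nonneg (h.super x) (inv_nonneg.mpr (hpos x).le)
    rw [e5] at e2
    rw [e1]
    have e7 : (2 * β)⁻¹ * ((∑ i, ∑ j, a x i j * Dd (bv i) (Dd (bv j) w) x) * (w x)⁻¹
        - ∑ i, ∑ j, (a x i j) * Dd (bv j) v x * Dd (bv i) v x) ≤
        (2 * β)⁻¹ * (- (lam * ((2 * β) ^ 2 * ‖x - y‖ ^ 2))) := by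
      apply mul_le_mul_of_nonneg_left _ (by positivity)
      linarith
    have e8 : (2 * β)⁻¹ * (- (lam * ((2 * β) ^ 2 * ‖x - y‖ ^ 2))) =
        - (2 * β * lam * ‖x - y‖ ^ 2) := by
      field_simp
    have := h.tr x
    linarith
  have hlt := lam_trace_le (h.ell x) hPsd
  have htn := hPsd.trace_nonneg
  refine ⟨?_, ?_, ?_⟩
  · nlinarith
  · refine (psd_det_le hPsd).trans (pow_le_pow_left₀ htn ?_ n)
    rw [le_div_iff₀ hl]
    have : 0 ≤ 2 * β * lam * ‖x - y‖ ^ 2 := by positivity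
    linarith
  · ext i
    simp only [cmap]
    rw [grad_i]
    field_simp
    simp

open MeasureTheory Metric in
lemma growth {n : ℕ} {lam Lam : ℝ} {a : EuclideanSpace ℝ (Fin n) → Matrix (Fin n) (Fin n) ℝ}
    {w : EuclideanSpace ℝ (Fin n) → ℝ} (h : IsSuper lam Lam a w)
    {z x1 : EuclideanSpace ℝ (Fin n)} {r : ℝ} (hr : 0 < r) (hx1 : x1 ∈ closedBall z r) :
    volume (ball z (r / 2)) ≤ ENNReal.ofReal ((Lam / lam) ^ n) *
      volume (ball z r ∩ {x | w x ≤ Real.exp (9 * Lam / (2 * lam)) * w x1}) := by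
  obtain ⟨ε, hε, hwε⟩ := h.pos
  have hpos : ∀ x, 0 < w x := fun x => hε.trans_le (hwε x)
  have hl := h.lam_pos
  have hL := h.Lam_pos
  set v : EuclideanSpace ℝ (Fin n) → ℝ := fun x => Real.log (w x) with hvdef
  have hv : ContDiff ℝ (⊤ : ℕ∞) v := h.smooth.log (fun x => (hpos x).ne')
  set β : ℝ := 2 * Lam / (lam * r ^ 2) with hβdef
  have hβ : 0 < β := by positivity
  set A := (ball z r ∩ {x | w x ≤ Real.exp (9 * Lam / (2 * lam)) * w x1}) ∩
    {x | |(jac β v x).det| ≤ (Lam / lam) ^ n} with hA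
  have hdet : Continuous fun x => (jac β v x).det := by
    apply Continuous.matrix_det
    refine continuous_matrix fun i j => ?_
    simp only [jac, Matrix.of_apply]
    have := (Dd_smooth (bv j) (Dd_smooth (bv i) hv)).continuous
    fun_prop
  have hAm : MeasurableSet A := by
    refine (measurableSet_ball.inter ?_).inter ?_
    · exact (isClosed_le h.smooth.continuous continuous_const).measurableSet
    · exact (isClosed_le hdet.abs continuous_const).measurableSet
  have hsub : ball z (r / 2) ⊆ cmap β v '' A := by
    intro y hy
    have hcont : Continuous fun x => v x + β * ‖x - y‖ ^ 2 := by
      have := hv.continuous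
      fun_prop
    have htend : Filter.Tendsto (fun x => v x + β * ‖x - y‖ ^ 2)
        (Filter.cocompact (EuclideanSpace ℝ (Fin n))) Filter.atTop := by
      apply Filter.tendsto_atTop_add_left_of_le _ (Real.log ε)
      · intro x; exact Real.log_le_log hε (hwε x)
      · apply Filter.Tendsto.const_mul_atTop hβ
        apply (Filter.tendsto_pow_atTop two_ne_zero).comp
        exact (tendsto_dist_right_cocompact_atTop y).congr fun x => dist_eq_norm x y
    obtain ⟨x, hx⟩ := hcont.exists_forall_le htend
    obtain ⟨h1, h2, h3⟩ := contact h hβ hx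
    refine ⟨x, ⟨⟨?_, ?_⟩, h2⟩, h3⟩
    · have e : 2 * β * lam = 4 * Lam / r ^ 2 := by
        rw [hβdef]; field_simp; ring
      rw [e, div_mul_eq_mul_div, div_le_iff₀ (by positivity)] at h1
      have h4 : ‖x - y‖ ≤ r / 2 := by
        apply le_of_sq_le_sq _ (by positivity)
        nlinarith
      rw [mem_ball] at hy ⊢
      have := dist_triangle x y z
      rw [dist_eq_norm x y] at this
      linarith
    · have h5 := hx x1
      have h6 : ‖x1 - y‖ ≤ 3 * r / 2 := by
        have := dist_triangle x1 z y
        rw [mem_closedBall] at hx1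
        rw [mem_ball, dist_comm] at hy
        rw [← dist_eq_norm]; linarith
      have h7 : β * ‖x1 - y‖ ^ 2 ≤ 9 * Lam / (2 * lam) := by
        calc β * ‖x1 - y‖ ^ 2 ≤ β * (3 * r / 2) ^ 2 := by gcongr
          _ = _ := by rw [hβdef]; field_simp; ring
      have h8 : 0 ≤ β * ‖x - y‖ ^ 2 := by positivity
      have h9 : Real.log (w x) ≤ 9 * Lam / (2 * lam) + Real.log (w x1) := by
        simp only [hvdef] at h5
        linarith
      show w x ≤ _
      calc w x = Real.exp (Real.log (w x)) := (Real.exp_log (hpos x)).symm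
        _ ≤ Real.exp (9 * Lam / (2 * lam) + Real.log (w x1)) := Real.exp_le_exp.mpr h9
        _ = _ := by rw [Real.exp_add, Real.exp_log (hpos x1)]
  calc volume (ball z (r / 2)) ≤ volume (cmap β v '' A) := measure_mono hsub
    _ ≤ ∫⁻ x in A, ENNReal.ofReal |(Matrix.toEuclideanCLM (𝕜 := ℝ) (jac β v x)).det| :=
        addHaar_image_le_lintegral_abs_det_fderiv volume hAm
          (fun x _ => (cmap_hasFDerivAt β hv x).hasFDerivWithinAt)
    _ ≤ ∫⁻ _ in A, ENNReal.ofReal ((Lam / lam) ^ n) := by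
        apply setLIntegral_mono' hAm
        intro x hx
        rw [det_toEuclideanCLM]
        exact ENNReal.ofReal_le_ofReal hx.2
    _ = ENNReal.ofReal ((Lam / lam) ^ n) * volume A := by simp
    _ ≤ _ := by gcongr; exact Set.inter_subset_left

open Metric in
lemma pick_ball {n : ℕ} {K : Set (EuclideanSpace ℝ (Fin n))} (hK : IsClosed K)
    {y z x0 : EuclideanSpace ℝ (Fin n)} {R : ℝ} (hy : y ∈ ball z R) (hyK : y ∉ K)
    (hx0 : x0 ∈ K) (hx0R : x0 ∈ closedBall z R) :
    ∃ c r, 0 < r ∧ r ≤ R ∧ y ∈ ball c r ∧ ball c r ⊆ ball z R \ K ∧ ∃ x1 ∈ K, x1 ∈ closedBall c r := by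
  have hR : 0 < R := pos_of_mem_ball hy
  set c : ℝ → EuclideanSpace ℝ (Fin n) := fun s => y + s • (z - y) with hc
  have hcc : Continuous c := by fun_prop
  set S : Set (ℝ × EuclideanSpace ℝ (Fin n)) :=
    (Set.Icc 0 1 ×ˢ (closedBall z R ∩ K)) ∩ {p | dist p.2 (c p.1) ≤ p.1 * R} with hS
  have hScpt : IsCompact S := by
    refine (isCompact_Icc.prod ((isCompact_closedBall z R).inter_right hK)).inter_right ?_
    exact isClosed_le (by fun_prop) (by fun_prop)
  have hSne : S.Nonempty := by
    refine ⟨(1, x0), ⟨⟨by simp, hx0R, hx0⟩, ?_⟩⟩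
    simpa [hc] using hx0R
  obtain ⟨⟨s, x1⟩, ⟨⟨⟨hs0, hs1⟩, hx1R, hx1K⟩, hx1⟩, hmin⟩ :=
    hScpt.exists_isMinOn hSne continuous_fst.continuousOn
  simp only at hs0 hs1 hx1R hx1K hx1
  simp only [Set.mem_ofPred_eq] at hx1
  have hspos : 0 < s := by
    rcases hs0.eq_or_lt with h | h
    · exfalso
      rw [← h] at hx1
      simp [hc] at hx1
      exact hyK (hx1 ▸ hx1K)
    · exact h
  rw [mem_ball] at hy
  have hsub : ∀ x, ∀ s' : ℝ, 0 ≤ s' → s' ≤ 1 → dist x (c s') < s' * R → dist x z < R := by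
    intro x s' h0 h1 hx
    have e : dist (c s') z = (1 - s') * dist y z := by
      rw [dist_eq_norm, dist_eq_norm]
      have : c s' - z = (1 - s') • (y - z) := by simp only [hc]; module
      rw [this, norm_smul, Real.norm_of_nonneg (by linarith)]
    have := dist_triangle x (c s') z
    nlinarith
  refine ⟨c s, s * R, by positivity, by nlinarith, ?_, ?_, x1, hx1K, hx1⟩
  · rw [mem_ball]
    have e : dist y (c s) = s * dist y z := by
      rw [dist_eq_norm, dist_eq_norm]
      have : y - c s = s • (y - z) := by simp only [hc]; module
      rw [this, norm_smul, Real.norm_of_nonneg hs0]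
    rw [e]
    exact mul_lt_mul_of_pos_left hy hspos
  · intro x hx
    rw [mem_ball] at hx
    refine ⟨hsub x s hs0 hs1 hx, fun hxK => ?_⟩
    have hev : ∀ᶠ s' in nhds s, dist x (c s') < s' * R :=
      (show Continuous fun s' => dist x (c s') by fun_prop).continuousAt.eventually_lt
        (show Continuous fun s' : ℝ => s' * R by fun_prop).continuousAt hx
    have hev2 : ∀ᶠ s' in nhds s, 0 < s' := lt_mem_nhds hspos
    obtain ⟨s', ⟨hs'1, hs'2⟩, hs'3⟩ :=
      (((hev.and hev2).filter_mono nhdsWithin_le_nhds).and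
        (self_mem_nhdsWithin : ∀ᶠ s' in nhdsWithin s (Set.Iio s), s' < s)).exists
    have hlt : s' ≤ 1 := by
      have : s' < s := hs'3
      linarith
    have := hmin (show (s', x) ∈ S from
      ⟨⟨⟨hs'2.le, hlt⟩, (hsub x s' hs'2.le hlt hs'1).le, hxK⟩, hs'1.le⟩)
    have h2 : s ≤ s' := this
    have h3 : s' < s := hs'3
    linarith

open MeasureTheory Metric in
lemma cover {n : ℕ} {lam Lam : ℝ} {a : EuclideanSpace ℝ (Fin n) → Matrix (Fin n) (Fin n) ℝ}
    {w : EuclideanSpace ℝ (Fin n) → ℝ} (h : IsSuper lam Lam a w)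
    {z x0 : EuclideanSpace ℝ (Fin n)} {R t : ℝ} (hx0 : x0 ∈ closedBall z R) (hw : w x0 ≤ t) :
    volume (ball z R \ {x | w x ≤ t}) ≤ ENNReal.ofReal (10 ^ n * (Lam / lam) ^ n) *
      volume ((ball z R \ {x | w x ≤ t}) ∩ {x | w x ≤ Real.exp (9 * Lam / (2 * lam)) * t}) := by
  set K := {x | w x ≤ t} with hKdef
  have hK : IsClosed K := isClosed_le h.smooth.continuous continuous_const
  set M := Real.exp (9 * Lam / (2 * lam)) with hM
  have hl := h.lam_pos
  have hL := h.Lam_pos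
  set 𝓑 : Set (EuclideanSpace ℝ (Fin n) × ℝ) :=
    {p | 0 < p.2 ∧ p.2 ≤ R ∧ ball p.1 p.2 ⊆ ball z R \ K ∧ ∃ x1 ∈ K, x1 ∈ closedBall p.1 p.2} with hB
  obtain ⟨U, hU, hdisj, hcov⟩ := Vitali.exists_disjoint_subfamily_covering_enlargement_closedBall
    𝓑 (fun p => p.1) (fun p => p.2) R (fun p hp => hp.2.1) 5 (by norm_num)
  have hUc : U.Countable := by
    refine hdisj.countable_of_nonempty_interior fun p hp => ?_
    have : 0 < p.2 := (hU hp).1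
    exact ⟨p.1, ball_subset_interior_closedBall (mem_ball_self this)⟩
  have hsub : ball z R \ K ⊆ ⋃ p ∈ U, closedBall p.1 (5 * p.2) := by
    rintro y ⟨hy, hyK⟩
    obtain ⟨c, r, hr, hrR, hyb, hbs, x1, hx1⟩ := pick_ball hK hy hyK (show x0 ∈ K from hw) hx0
    obtain ⟨b, hb, hbb⟩ := hcov (c, r) ⟨hr, hrR, hbs, x1, hx1⟩
    exact Set.mem_biUnion hb (hbb (ball_subset_closedBall hyb))
  set G := (ball z R \ K) ∩ {x | w x ≤ M * t} with hG
  have hMm : MeasurableSet {x | w x ≤ M * t} :=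
    (isClosed_le h.smooth.continuous continuous_const).measurableSet
  have hball : ∀ p ∈ U, volume (closedBall p.1 (5 * p.2)) ≤
      ENNReal.ofReal (10 ^ n * (Lam / lam) ^ n) * volume (ball p.1 p.2 ∩ {x | w x ≤ M * t}) := by
    intro p hp
    obtain ⟨hp0, _, _, x1, hx1K, hx1⟩ := hU hp
    have h1 := growth h hp0 hx1
    have h2 : volume (closedBall p.1 (5 * p.2)) = ENNReal.ofReal (10 ^ n) * volume (ball p.1 (p.2 / 2)) := by
      rw [Measure.addHaar_closedBall _ _ (by positivity), Measure.addHaar_ball_of_pos _ p.1 (by positivity : 0 < p.2 / 2),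
        ← mul_assoc, ← ENNReal.ofReal_mul (by positivity)]
      congr 2
      simp only [finrank_euclideanSpace, Fintype.card_fin]
      rw [← mul_pow]; congr 1; ring
    rw [h2, ENNReal.ofReal_mul (by positivity), mul_assoc]
    gcongr
    refine h1.trans ?_
    gcongr
    exact hx1K
  calc volume (ball z R \ K) ≤ volume (⋃ p ∈ U, closedBall p.1 (5 * p.2)) := measure_mono hsub
    _ ≤ ∑' p : U, volume (closedBall p.1.1 (5 * p.1.2)) := measure_biUnion_le _ hUc _
    _ ≤ ∑' p : U, ENNReal.ofReal (10 ^ n * (Lam / lam) ^ n) *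
          volume (ball p.1.1 p.1.2 ∩ {x | w x ≤ M * t}) :=
        ENNReal.tsum_le_tsum fun p => hball p.1 p.2
    _ = ENNReal.ofReal (10 ^ n * (Lam / lam) ^ n) *
          ∑' p : U, volume (ball p.1.1 p.1.2 ∩ {x | w x ≤ M * t}) := ENNReal.tsum_mul_left
    _ = ENNReal.ofReal (10 ^ n * (Lam / lam) ^ n) *
          volume (⋃ p ∈ U, (ball p.1 p.2 ∩ {x | w x ≤ M * t})) := by
        rw [measure_biUnion hUc]
        · intro p hp q hq hpq
          refine (hdisj hp hq hpq).mono ?_ ?_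
          · exact Set.inter_subset_left.trans ball_subset_closedBall
          · exact Set.inter_subset_left.trans ball_subset_closedBall
        · intro p _; exact measurableSet_ball.inter hMm
    _ ≤ _ := by
        gcongr
        refine Set.iUnion₂_subset fun p hp => ?_
        exact Set.inter_subset_inter_left _ (hU hp).2.2.1

open MeasureTheory Metric in
lemma decay_step {n : ℕ} {lam Lam : ℝ} {a : EuclideanSpace ℝ (Fin n) → Matrix (Fin n) (Fin n) ℝ}
    {w : EuclideanSpace ℝ (Fin n) → ℝ} (h : IsSuper lam Lam a w)
    {z x0 : EuclideanSpace ℝ (Fin n)} {R t : ℝ} (hx0 : x0 ∈ closedBall z R) (hw : w x0 ≤ t) :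
    volume.real (ball z R \ {x | w x ≤ Real.exp (9 * Lam / (2 * lam)) * t}) ≤
      (10 ^ n * (Lam / lam) ^ n / (10 ^ n * (Lam / lam) ^ n + 1)) *
        volume.real (ball z R \ {x | w x ≤ t}) := by
  have hl := h.lam_pos
  have hL := h.Lam_pos
  obtain ⟨ε, hε, hwε⟩ := h.pos
  have ht : 0 < t := lt_of_lt_of_le (hε.trans_le (hwε x0)) hw
  set M := Real.exp (9 * Lam / (2 * lam)) with hM
  have hM1 : 1 ≤ M := Real.one_le_exp (by positivity)
  have hMt : t ≤ M * t := by nlinarith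
  set Kc := 10 ^ n * (Lam / lam) ^ n with hKc
  have hKpos : 0 < Kc := by positivity
  have h1 := cover h hx0 hw
  set G := ball z R \ {x | w x ≤ t} with hG
  have hGfin : volume G ≠ ⊤ := ((measure_mono Set.sdiff_subset).trans_lt measure_ball_lt_top).ne
  have hMm : MeasurableSet {x | w x ≤ M * t} :=
    (isClosed_le h.smooth.continuous continuous_const).measurableSet
  have h2 : volume.real G ≤ Kc * volume.real (G ∩ {x | w x ≤ M * t}) := by
    have := ENNReal.toReal_mono (ENNReal.mul_ne_top ENNReal.ofReal_ne_top
      (ne_top_of_le_ne_top hGfin (measure_mono Set.inter_subset_left))) h1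
    rw [ENNReal.toReal_mul, ENNReal.toReal_ofReal hKpos.le] at this
    exact this
  have h3 := measureReal_inter_add_sdiff (μ := volume) (s := G) hMm hGfin
  have h4 : G \ {x | w x ≤ M * t} = ball z R \ {x | w x ≤ M * t} := by
    ext x
    simp only [hG, Set.mem_sdiff, Set.mem_ofPred_eq]
    constructor
    · rintro ⟨⟨h1, h2⟩, h3⟩; exact ⟨h1, h3⟩
    · rintro ⟨h1, h2⟩; exact ⟨⟨h1, fun h => h2 (h.trans hMt)⟩, h2⟩
  rw [h4] at h3
  set m' := volume.real (ball z R \ {x | w x ≤ M * t})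
  have hm' : 0 ≤ m' := measureReal_nonneg
  have hm : 0 ≤ volume.real G := measureReal_nonneg
  rw [div_mul_eq_mul_div, le_div_iff₀ (by positivity)]
  have h5 : m' ≤ volume.real G := by
    have : 0 ≤ volume.real (G ∩ {x | w x ≤ M * t}) := measureReal_nonneg
    linarith
  have h6 : volume.real (G ∩ {x | w x ≤ M * t}) = volume.real G - m' := by linarith
  rw [h6] at h2
  nlinarith

open MeasureTheory Metric in
lemma decay {n : ℕ} {lam Lam : ℝ} {a : EuclideanSpace ℝ (Fin n) → Matrix (Fin n) (Fin n) ℝ}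
    {w : EuclideanSpace ℝ (Fin n) → ℝ} (h : IsSuper lam Lam a w)
    {z x0 : EuclideanSpace ℝ (Fin n)} {R t : ℝ} (hx0 : x0 ∈ closedBall z R) (hw : w x0 ≤ t) (k : ℕ) :
    volume.real (ball z R \ {x | w x ≤ Real.exp (9 * Lam / (2 * lam)) ^ k * t}) ≤
      (10 ^ n * (Lam / lam) ^ n / (10 ^ n * (Lam / lam) ^ n + 1)) ^ k *
        volume.real (ball z R) := by
  have hl := h.lam_pos
  have hL := h.Lam_pos
  obtain ⟨ε, hε, hwε⟩ := h.pos
  have ht : 0 < t := lt_of_lt_of_le (hε.trans_le (hwε x0)) hw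
  induction k with
  | zero =>
    simp only [pow_zero, one_mul]
    exact measureReal_mono Set.sdiff_subset measure_ball_lt_top.ne
  | succ k ih =>
    have hM1 : 1 ≤ Real.exp (9 * Lam / (2 * lam)) ^ k := one_le_pow₀ (Real.one_le_exp (by positivity))
    have h1 := decay_step h hx0 (t := Real.exp (9 * Lam / (2 * lam)) ^ k * t) (by nlinarith)
    rw [← mul_assoc, ← pow_succ'] at h1
    refine h1.trans ?_
    rw [pow_succ', mul_assoc]
    gcongr

open MeasureTheory Metric in
lemma simul {n : ℕ} {lam Lam : ℝ} (hl : 0 < lam) (hL : 0 < Lam)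
    {a : EuclideanSpace ℝ (Fin n) → Matrix (Fin n) (Fin n) ℝ}
    {ι : Type} [Fintype ι] (w : ι → EuclideanSpace ℝ (Fin n) → ℝ)
    (h : ∀ i, ∀ η > 0, IsSuper lam Lam a (fun x => w i x + η))
    (hinf : ∀ i, ∀ η > 0, ∃ x, w i x < η) {ε : ℝ} (hε : 0 < ε) :
    ∃ x, ∀ i, w i x ≤ ε := by
  set M := Real.exp (9 * Lam / (2 * lam)) with hM
  set θ := (10 ^ n * (Lam / lam) ^ n / (10 ^ n * (Lam / lam) ^ n + 1)) with hθ
  have hθ0 : 0 ≤ θ := by positivity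
  have hθ1 : θ < 1 := by rw [hθ, div_lt_one (by positivity)]; linarith
  obtain ⟨k, hk⟩ := exists_pow_lt_of_lt_one
    (show (0 : ℝ) < 1 / (Fintype.card ι + 1) by positivity) hθ1
  have hMpos : 0 < M := Real.exp_pos _
  set η := ε / (2 * M ^ k) with hη
  have hηpos : 0 < η := by positivity
  choose x hx using fun i => hinf i η hηpos
  set R := 1 + ∑ i, ‖x i‖ with hR
  have hRpos : 0 < R := by
    have : 0 ≤ ∑ i, ‖x i‖ := Finset.sum_nonneg fun i _ => norm_nonneg _
    linarith
  have hxR : ∀ i, x i ∈ closedBall (0 : EuclideanSpace ℝ (Fin n)) R := by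
    intro i
    rw [mem_closedBall, dist_zero_right]
    have := Finset.single_le_sum (f := fun i => ‖x i‖) (fun j _ => norm_nonneg _) (Finset.mem_univ i)
    linarith
  have hd : ∀ i, volume.real (ball 0 R \ {y | w i y ≤ ε}) ≤
      1 / (Fintype.card ι + 1) * volume.real (ball (0 : EuclideanSpace ℝ (Fin n)) R) := by
    intro i
    have h1 := decay (h i η hηpos) (hxR i) (t := 2 * η) (by have := hx i; linarith) k
    have e : M ^ k * (2 * η) = ε := by rw [hη]; field_simp
    rw [e] at h1
    refine le_trans ?_ (h1.trans (mul_le_mul_of_nonneg_right hk.le measureReal_nonneg))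
    apply measureReal_mono _ (ne_top_of_le_ne_top measure_ball_lt_top.ne (measure_mono Set.sdiff_subset))
    rintro y ⟨hy1, hy2⟩
    refine ⟨hy1, fun hy3 => hy2 ?_⟩
    simp only [Set.mem_ofPred_eq] at hy3 ⊢
    linarith
  by_contra! hcon
  have hcovr : ball (0 : EuclideanSpace ℝ (Fin n)) R ⊆ ⋃ i, ball 0 R \ {y | w i y ≤ ε} := by
    intro y hy
    obtain ⟨i, hi⟩ := hcon y
    exact Set.mem_iUnion.mpr ⟨i, hy, not_le.mpr hi⟩
  have hV : 0 < volume.real (ball (0 : EuclideanSpace ℝ (Fin n)) R) :=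
    ENNReal.toReal_pos (measure_ball_pos _ _ hRpos).ne' measure_ball_lt_top.ne
  have h1 : volume.real (ball (0 : EuclideanSpace ℝ (Fin n)) R) ≤
      ∑ i, volume.real (ball 0 R \ {y | w i y ≤ ε}) := by
    refine (measureReal_mono hcovr ?_).trans (measureReal_iUnion_fintype_le _)
    exact ne_top_of_le_ne_top measure_ball_lt_top.ne
      (measure_mono (Set.iUnion_subset fun i => Set.sdiff_subset))
  have h2 := h1.trans (Finset.sum_le_sum fun i _ => hd i)
  rw [Finset.sum_const, Finset.card_univ, nsmul_eq_mul, ← mul_assoc, mul_one_div] at h2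
  have h3 : (Fintype.card ι : ℝ) / (Fintype.card ι + 1) < 1 := by
    rw [div_lt_one (by positivity)]; linarith
  nlinarith

lemma hess_apply {n : ℕ} (u : EuclideanSpace ℝ (Fin n) → ℝ) (x i j) :
    hessianMatrix u x i j = Dd (bv i) (Dd (bv j) u) x := rfl

lemma fderiv_eq_sum {n : ℕ} (F : (Fin n → Fin n → ℝ) → ℝ) (M P : Fin n → Fin n → ℝ) :
    fderiv ℝ F M P = ∑ i, ∑ j, derivMatrix F M i j * P i j := by
  have e : P = ∑ i, ∑ j, P i j • (Pi.single i (Pi.single j (1 : ℝ)) : Fin n → Fin n → ℝ) := by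
    ext k l
    simp only [Finset.sum_apply, Pi.smul_apply, smul_eq_mul]
    rw [Finset.sum_eq_single k]
    · rw [Finset.sum_eq_single l]
      · simp
      · intro b _ hb; simp [Ne.symm hb]
      · simp
    · intro b _ hb
      refine Finset.sum_eq_zero fun j _ => ?_
      simp [Pi.single_eq_of_ne (Ne.symm hb)]
    · simp
  conv_lhs => rw [e]
  simp only [map_sum, map_smul, smul_eq_mul, derivMatrix, Matrix.of_apply]
  exact Finset.sum_congr rfl fun i _ => Finset.sum_congr rfl fun j _ => mul_comm _ _

lemma ellipticity {n : ℕ} (F : (Fin n → Fin n → ℝ) → ℝ)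
    (hF : ContDiff ℝ (⊤ : ℕ∞) F)
    (hE : ∀ M : Fin n → Fin n → ℝ, (derivMatrix F M).PosDef) (C : ℝ) :
    ∃ lam Lam : ℝ, 0 < lam ∧ 0 < Lam ∧ ∀ M ∈ Metric.closedBall (0 : Fin n → Fin n → ℝ) C,
      (derivMatrix F M - lam • (1 : Matrix (Fin n) (Fin n) ℝ)).PosSemidef ∧
      (derivMatrix F M).trace ≤ Lam := by
  have hc : ∀ i j, Continuous fun M => derivMatrix F M i j := by
    intro i j
    simp only [derivMatrix, Matrix.of_apply]
    exact (hF.continuous_fderiv (by simp)).clm_apply continuous_const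
  have hK := isCompact_closedBall (0 : Fin n → Fin n → ℝ) C
  obtain ⟨Lam, hLam⟩ : ∃ Lam, ∀ M ∈ Metric.closedBall (0 : Fin n → Fin n → ℝ) C,
      (derivMatrix F M).trace ≤ Lam := by
    have hct : Continuous fun M => (derivMatrix F M).trace := by
      simp only [Matrix.trace, Matrix.diag]
      exact continuous_finsetSum _ fun i _ => hc i i
    obtain ⟨b, hb⟩ := hK.bddAbove_image hct.continuousOn
    exact ⟨b, fun M hM => hb ⟨M, hM, rfl⟩⟩
  have hS := hK.prod (isCompact_sphere (0 : EuclideanSpace ℝ (Fin n)) 1)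
  have hquad : ∀ M (ξ : Fin n → ℝ), ξ ⬝ᵥ (derivMatrix F M).mulVec ξ =
      ∑ i, ∑ j, ξ i * (derivMatrix F M i j * ξ j) := by
    intro M ξ; simp [dotProduct, Matrix.mulVec, Finset.mul_sum]
  obtain ⟨lam, hlam, hle⟩ := hS.exists_forall_le' (a := (0 : ℝ))
    (f := fun p => ∑ i, ∑ j, p.2 i * (derivMatrix F p.1 i j * p.2 j)) (by
      apply Continuous.continuousOn
      refine continuous_finsetSum _ fun i _ => continuous_finsetSum _ fun j _ => ?_
      have := (hc i j).comp (continuous_fst (X := Fin n → Fin n → ℝ) (Y := EuclideanSpace ℝ (Fin n)))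
      simp only [Function.comp_def] at this
      fun_prop) (by
      rintro ⟨M, ξ⟩ ⟨_, hξ⟩
      simp only at hξ ⊢
      have hne : (ξ : Fin n → ℝ) ≠ 0 := by
        intro h0
        have : ξ = 0 := by ext i; simpa using congrFun h0 i
        rw [this] at hξ
        simp at hξ
      have := (hE M).dotProduct_mulVec_pos hne
      rw [star_trivial, hquad] at this
      exact this)
  refine ⟨lam, max Lam 1, hlam, by positivity, fun M hM => ⟨?_, (hLam M hM).trans (le_max_left _ _)⟩⟩
  apply Matrix.PosSemidef.of_dotProduct_mulVec_nonneg
  · apply (hE M).1.sub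
    ext i j
    simp [Matrix.one_apply, eq_comm]
  · intro ξ
    rw [star_trivial, Matrix.sub_mulVec, Matrix.smul_mulVec, Matrix.one_mulVec, dotProduct_sub, hquad,
      dotProduct_smul, smul_eq_mul]
    set x : EuclideanSpace ℝ (Fin n) := WithLp.toLp 2 ξ with hx
    have hn : ξ ⬝ᵥ ξ = ‖x‖ ^ 2 := by
      rw [EuclideanSpace.norm_sq_eq]; simp [dotProduct, hx, sq]
    rw [hn]
    by_cases h0 : x = 0
    · have : ξ = 0 := by
        ext i
        have := congrArg (fun y : EuclideanSpace ℝ (Fin n) => y i) h0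
        simpa [hx] using this
      simp [h0, this]
    · have hnx : 0 < ‖x‖ := norm_pos_iff.mpr h0
      have := hle (M, ‖x‖⁻¹ • x) ⟨hM, by simp [norm_smul, hnx.ne']⟩
      simp only [PiLp.smul_apply, smul_eq_mul] at this
      have e : ∑ i, ∑ j, ‖x‖⁻¹ * x i * (derivMatrix F M i j * (‖x‖⁻¹ * x j)) =
          (‖x‖ ^ 2)⁻¹ * ∑ i, ∑ j, ξ i * (derivMatrix F M i j * ξ j) := by
        rw [Finset.mul_sum]
        refine Finset.sum_congr rfl fun i _ => ?_
        rw [Finset.mul_sum]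
        refine Finset.sum_congr rfl fun j _ => ?_
        simp only [hx]
        field_simp
      rw [e, inv_mul_eq_div, le_div_iff₀ (by positivity)] at this
      linarith

lemma hess_symm {n : ℕ} {u : EuclideanSpace ℝ (Fin n) → ℝ} (hu : ContDiff ℝ (⊤ : ℕ∞) u) (x) :
    (hessianMatrix u x).IsSymm := by
  ext i j
  rw [Matrix.transpose_apply, hess_apply, hess_apply, Dd_comm _ _ hu]

lemma tangent_ineq {n : ℕ} (F : (Fin n → Fin n → ℝ) → ℝ)
    (hF : ContDiff ℝ (⊤ : ℕ∞) F)
    (hLC : Convex ℝ {M : Fin n → Fin n → ℝ | (Matrix.of M).IsSymm ∧ 0 ≤ F M})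
    {u : EuclideanSpace ℝ (Fin n) → ℝ} (hu : ContDiff ℝ (⊤ : ℕ∞) u)
    (hEqn : ∀ x, F (fun i j => hessianMatrix u x i j) = 0) (x y) :
    ∑ i, ∑ j, derivMatrix F (hessianMatrix u x) i j * hessianMatrix u x i j ≤
    ∑ i, ∑ j, derivMatrix F (hessianMatrix u x) i j * hessianMatrix u y i j := by
  set X : Fin n → Fin n → ℝ := fun i j => hessianMatrix u x i j with hX
  set Y : Fin n → Fin n → ℝ := fun i j => hessianMatrix u y i j with hY
  have hXm : X ∈ {M : Fin n → Fin n → ℝ | (Matrix.of M).IsSymm ∧ 0 ≤ F M} :=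
    ⟨hess_symm hu x, (hEqn x).ge⟩
  have hYm : Y ∈ {M : Fin n → Fin n → ℝ | (Matrix.of M).IsSymm ∧ 0 ≤ F M} :=
    ⟨hess_symm hu y, (hEqn y).ge⟩
  have h1 : 0 ≤ fderiv ℝ F X (Y - X) := by
    have hd : HasDerivAt (fun t : ℝ => F (X + t • (Y - X))) (fderiv ℝ F X (Y - X)) 0 := by
      have h1 : HasDerivAt (fun t : ℝ => X + t • (Y - X)) (Y - X) 0 := by
        simpa using ((hasDerivAt_id (0 : ℝ)).smul_const (Y - X)).const_add X
      have h2 : HasFDerivAt F (fderiv ℝ F X) (X + (0 : ℝ) • (Y - X)) := by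
        simpa using (hF.differentiable (by simp) X).hasFDerivAt
      exact h2.comp_hasDerivAt (0 : ℝ) h1
    have hlim := hd.tendsto_slope_zero_right
    refine ge_of_tendsto hlim ?_
    have : ∀ᶠ t : ℝ in nhdsWithin 0 (Set.Ioi 0), 0 < t ∧ t < 1 :=
      Ioo_mem_nhdsGT one_pos
    filter_upwards [this] with t ht
    have hm := hLC hXm hYm (a := 1 - t) (b := t) (by linarith) ht.1.le (by ring)
    have e : (1 - t) • X + t • Y = X + t • (Y - X) := by module
    rw [e] at hm
    have h2 : F X = 0 := hEqn x
    simp only [zero_add, zero_smul, add_zero, h2, sub_zero, smul_eq_mul]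
    exact mul_nonneg (inv_nonneg.mpr ht.1.le) hm.2
  rw [fderiv_eq_sum] at h1
  simp only [Pi.sub_apply, mul_sub, Finset.sum_sub_distrib] at h1
  have h3 : X = hessianMatrix u x := rfl
  rw [h3] at h1
  linarith

lemma Dd_lincomb {n : ℕ} (c : Fin n → Fin n → ℝ) (f : Fin n → Fin n → EuclideanSpace ℝ (Fin n) → ℝ)
    (hf : ∀ i j, ContDiff ℝ (⊤ : ℕ∞) (f i j)) (v) :
    Dd v (fun y => ∑ i, ∑ j, c i j * f i j y) = fun y => ∑ i, ∑ j, c i j * Dd v (f i j) y := by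
  ext x
  have h : HasFDerivAt (fun y => ∑ i, ∑ j, c i j * f i j y)
      (∑ i, ∑ j, c i j • fderiv ℝ (f i j) x) x := by
    refine HasFDerivAt.fun_sum fun i _ => HasFDerivAt.fun_sum fun j _ => ?_
    exact (smooth_diff (hf i j) x).hasFDerivAt.const_mul _
  simp only [Dd, h.fderiv]
  simp

lemma lin_super {n : ℕ} (F : (Fin n → Fin n → ℝ) → ℝ)
    (hF : ContDiff ℝ (⊤ : ℕ∞) F)
    (hLC : Convex ℝ {M : Fin n → Fin n → ℝ | (Matrix.of M).IsSymm ∧ 0 ≤ F M})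
    {u : EuclideanSpace ℝ (Fin n) → ℝ} (hu : ContDiff ℝ (⊤ : ℕ∞) u)
    (hEqn : ∀ x, F (fun i j => hessianMatrix u x i j) = 0) (d x) :
    0 ≤ ∑ i, ∑ j, derivMatrix F (hessianMatrix u x) i j * Dd (bv i) (Dd (bv j) (Dd d (Dd d u))) x := by
  set c := derivMatrix F (hessianMatrix u x) with hc
  set f : Fin n → Fin n → EuclideanSpace ℝ (Fin n) → ℝ := fun i j => Dd (bv i) (Dd (bv j) u) with hf
  have hfs : ∀ i j, ContDiff ℝ (⊤ : ℕ∞) (f i j) := fun i j => Dd_smooth _ (Dd_smooth _ hu)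
  have hg : ContDiff ℝ (⊤ : ℕ∞) (fun y => ∑ i, ∑ j, c i j * f i j y) :=
    ContDiff.sum fun i _ => ContDiff.sum fun j _ => contDiff_const.mul (hfs i j)
  have h1 := (min_test hg (fun y => tangent_ineq F hF hLC hu hEqn x y) d).2
  rw [Dd_lincomb c f hfs, Dd_lincomb c _ (fun i j => Dd_smooth d (hfs i j))] at h1
  have e : ∀ i j, Dd (bv i) (Dd (bv j) (Dd d (Dd d u))) = Dd d (Dd d (f i j)) := by
    intro i j
    show _ = Dd d (Dd d (Dd (bv i) (Dd (bv j) u)))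
    rw [Dd_comm d (bv i) (Dd_smooth _ hu), Dd_comm d (bv j) hu,
      Dd_comm d (bv i) (Dd_smooth _ (Dd_smooth _ hu)),
      Dd_comm d (bv j) (Dd_smooth _ hu)]
  simp only [e]
  exact h1

lemma hess_bound {n : ℕ} (A : Matrix (Fin n) (Fin n) ℝ) (i j : Fin n) :
    |A i j| ≤ ‖Matrix.toEuclideanCLM (𝕜 := ℝ) A‖ := by
  have h1 := (Matrix.toEuclideanCLM (𝕜 := ℝ) A).le_opNorm (bv j)
  have h2 : ‖(bv j : EuclideanSpace ℝ (Fin n))‖ = 1 := by simp [bv]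
  rw [h2, mul_one] at h1
  refine le_trans ?_ h1
  have h3 := PiLp.norm_apply_le ((Matrix.toEuclideanCLM (𝕜 := ℝ) A) (bv j)) i
  refine le_trans (le_of_eq ?_) h3
  rw [Matrix.ofLp_toEuclideanCLM]
  simp [bv, Matrix.mulVec, dotProduct]

lemma zero_of_trace {n : ℕ} (F : (Fin n → Fin n → ℝ) → ℝ) (hF : ContDiff ℝ (⊤ : ℕ∞) F)
    {C lam : ℝ} (hlam : 0 < lam)
    (hell : ∀ M ∈ Metric.closedBall (0 : Fin n → Fin n → ℝ) C,
      (derivMatrix F M - lam • (1 : Matrix (Fin n) (Fin n) ℝ)).PosSemidef)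
    {X Y : Fin n → Fin n → ℝ} (hX : X ∈ Metric.closedBall (0 : Fin n → Fin n → ℝ) C)
    (hY : Y ∈ Metric.closedBall (0 : Fin n → Fin n → ℝ) C) (hXY : F X = F Y)
    (hP : (Matrix.of (Y - X)).PosSemidef) : X = Y := by
  have hd : ∀ t : ℝ, HasDerivAt (fun t : ℝ => F (X + t • (Y - X)))
      (fderiv ℝ F (X + t • (Y - X)) (Y - X)) t := by
    intro t
    have h1 : HasDerivAt (fun t : ℝ => X + t • (Y - X)) (Y - X) t := by
      simpa using ((hasDerivAt_id t).smul_const (Y - X)).const_add X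
    exact (hF.differentiable (by simp) _).hasFDerivAt.comp_hasDerivAt t h1
  obtain ⟨t, ht, h0⟩ := exists_hasDerivAt_eq_zero (f := fun t : ℝ => F (X + t • (Y - X)))
    (f' := fun t => fderiv ℝ F (X + t • (Y - X)) (Y - X)) (a := 0) (b := 1) one_pos
    (fun t _ => (hd t).continuousAt.continuousWithinAt) (by simp [hXY]) (fun t _ => hd t)
  have hmem : X + t • (Y - X) ∈ Metric.closedBall (0 : Fin n → Fin n → ℝ) C := by
    have hcv := convex_closedBall (0 : Fin n → Fin n → ℝ) C
    have := hcv hX hY (show (0:ℝ) ≤ 1 - t by linarith [ht.2]) ht.1.le (by ring)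
    have e : (1 - t) • X + t • Y = X + t • (Y - X) := by module
    rwa [e] at this
  have h1 := lam_trace_le (hell _ hmem) hP
  have h2 : (derivMatrix F (X + t • (Y - X)) * Matrix.of (Y - X)).trace = 0 := by
    rw [fderiv_eq_sum] at h0
    rw [← h0]
    simp only [Matrix.trace, Matrix.diag, Matrix.mul_apply]
    refine Finset.sum_congr rfl fun i _ => Finset.sum_congr rfl fun j _ => ?_
    have := hP.1.apply i j
    simp only [star_trivial, Matrix.of_apply] at this
    simp only [Matrix.of_apply]
    rw [this]
  have h3 := hP.trace_nonneg
  have h4 : (Matrix.of (Y - X)).trace = 0 := by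
    rw [h2] at h1
    nlinarith
  rw [hP.trace_eq_zero_iff] at h4
  ext i j
  have := congrFun (congrFun h4 i) j
  simp at this
  linarith

lemma quad_of_const {n : ℕ} {u : EuclideanSpace ℝ (Fin n) → ℝ} (hu : ContDiff ℝ (⊤ : ℕ∞) u)
    (A : Matrix (Fin n) (Fin n) ℝ) (hA : ∀ x, hessianMatrix u x = A) : IsQuadraticPoly u := by
  have hsym : A.IsSymm := by rw [← hA 0]; exact hess_symm hu 0
  have hD : ∀ j x, Dd (bv j) u x = ∑ i, A i j * x i + Dd (bv j) u 0 := by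
    intro j
    have hsm : Differentiable ℝ (Dd (bv j) u) := smooth_diff (Dd_smooth _ hu)
    have hl : ∀ x, HasFDerivAt (fun x : EuclideanSpace ℝ (Fin n) => ∑ i, A i j * x i)
        (∑ i, A i j • (PiLp.proj 2 (fun _ => ℝ) i : EuclideanSpace ℝ (Fin n) →L[ℝ] ℝ)) x := by
      intro x
      refine HasFDerivAt.fun_sum fun i _ => ?_
      exact (PiLp.hasFDerivAt_apply (𝕜 := ℝ) 2 x i).const_mul _
    have hz : ∀ x, fderiv ℝ (fun x => Dd (bv j) u x - ∑ i, A i j * x i) x = 0 := by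
      intro x
      rw [((hsm x).hasFDerivAt.fun_sub (hl x)).fderiv]
      ext1 v
      have h1 := Dd_eq_sum v (Dd (bv j) u) x
      have h2 : fderiv ℝ (Dd (bv j) u) x v = ∑ i, v i * A i j := by
        rw [show fderiv ℝ (Dd (bv j) u) x v = Dd v (Dd (bv j) u) x from rfl, h1]
        refine Finset.sum_congr rfl fun i _ => ?_
        rw [← hess_apply, hA]
      simp only [sub_apply, h2, ContinuousLinearMap.sum_apply, smul_apply, PiLp.proj_apply,
        smul_eq_mul, zero_apply]
      rw [sub_eq_zero]
      exact Finset.sum_congr rfl fun i _ => mul_comm _ _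
    intro x
    have hdiff : Differentiable ℝ (fun x => Dd (bv j) u x - ∑ i, A i j * x i) :=
      fun x => ((hsm x).hasFDerivAt.fun_sub (hl x)).differentiableAt
    have := is_const_of_fderiv_eq_zero hdiff hz x 0
    simp at this
    linarith
  refine ⟨A, fun j => Dd (bv j) u 0, u 0, hsym, ?_⟩
  set q : EuclideanSpace ℝ (Fin n) → ℝ := fun x =>
    (1/2) * (∑ i, ∑ j, A i j * x i * x j) + (∑ i, Dd (bv i) u 0 * x i) with hq
  have hp : ∀ (i : Fin n) (x : EuclideanSpace ℝ (Fin n)), HasFDerivAt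
      (fun x : EuclideanSpace ℝ (Fin n) => x i) (PiLp.proj 2 (fun _ => ℝ) i) x :=
    fun i x => PiLp.hasFDerivAt_apply (𝕜 := ℝ) 2 x i
  have hqd : ∀ x, HasFDerivAt q ((1/2 : ℝ) • (∑ i, ∑ j, ((A i j * x i) •
      (PiLp.proj 2 (fun _ => ℝ) j : EuclideanSpace ℝ (Fin n) →L[ℝ] ℝ)
      + x j • (A i j • (PiLp.proj 2 (fun _ => ℝ) i : EuclideanSpace ℝ (Fin n) →L[ℝ] ℝ)))) +
      ∑ i, Dd (bv i) u 0 • (PiLp.proj 2 (fun _ => ℝ) i : EuclideanSpace ℝ (Fin n) →L[ℝ] ℝ)) x := by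
    intro x
    refine HasFDerivAt.add (HasFDerivAt.const_mul (HasFDerivAt.fun_sum fun i _ =>
      HasFDerivAt.fun_sum fun j _ => ?_) _) (HasFDerivAt.fun_sum fun i _ => (hp i x).const_mul _)
    exact ((hp i x).const_mul (A i j)).mul (hp j x)
  have hud := smooth_diff hu
  have hz : ∀ x, fderiv ℝ (fun x => u x - q x) x = 0 := by
    intro x
    rw [((hud x).hasFDerivAt.fun_sub (hqd x)).fderiv]
    ext1 v
    have h1 : fderiv ℝ u x v = ∑ j, v j * (∑ i, A i j * x i + Dd (bv j) u 0) := by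
      rw [show fderiv ℝ u x v = Dd v u x from rfl, Dd_eq_sum]
      exact Finset.sum_congr rfl fun j _ => by rw [hD]
    simp only [sub_apply, add_apply, h1, ContinuousLinearMap.sum_apply, smul_apply, PiLp.proj_apply,
        smul_eq_mul, zero_apply, Finset.sum_add_distrib, mul_add]
    have e1 : ∑ i, ∑ j, A i j * x i * v j = ∑ j, v j * ∑ i, A i j * x i := by
      rw [Finset.sum_comm]
      refine Finset.sum_congr rfl fun j _ => ?_
      rw [Finset.mul_sum]
      exact Finset.sum_congr rfl fun i _ => by ring
    have e2 : ∑ i, ∑ j, x j * (A i j * v i) = ∑ j, v j * ∑ i, A i j * x i := by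
      refine Finset.sum_congr rfl fun j _ => ?_
      rw [Finset.mul_sum]
      refine Finset.sum_congr rfl fun i _ => ?_
      rw [hsym.apply]; ring
    have e3 : ∑ i, Dd (bv i) u 0 * v i = ∑ i, v i * Dd (bv i) u 0 :=
      Finset.sum_congr rfl fun i _ => mul_comm _ _
    rw [e1, e2, e3]
    ring
  intro x
  have hdiff : Differentiable ℝ (fun x => u x - q x) :=
    fun x => ((hud x).hasFDerivAt.fun_sub (hqd x)).differentiableAt
  have := is_const_of_fderiv_eq_zero hdiff hz x 0
  simp [hq] at this
  simp only [one_div]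
  linarith

theorem evans_krylov_liouville (n : ℕ) (hn : 2 ≤ n)
    (F : (Fin n → Fin n → ℝ) → ℝ)
    (hF : ContDiff ℝ (⊤ : ℕ∞) F)
    (hElliptic : ∀ M : Fin n → Fin n → ℝ, (derivMatrix F M).PosDef)
    (hLevelConvex : Convex ℝ {M : Fin n → Fin n → ℝ | (Matrix.of M).IsSymm ∧ 0 ≤ F M})
    (u : EuclideanSpace ℝ (Fin n) → ℝ)
    (hu : ContDiff ℝ (⊤ : ℕ∞) u)
    (hHessBdd : ∃ C : ℝ, ∀ x, ‖Matrix.toEuclideanCLM (𝕜 := ℝ) (hessianMatrix u x)‖ ≤ C)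
    (hEqn : ∀ x, F (fun i j => hessianMatrix u x i j) = 0) :
    IsQuadraticPoly u := by
  obtain ⟨C, hC⟩ := hHessBdd
  have hC0 : 0 ≤ C := (norm_nonneg _).trans (hC 0)
  set H : EuclideanSpace ℝ (Fin n) → Fin n → Fin n → ℝ := fun x i j => hessianMatrix u x i j with hH
  have hHb : ∀ x i j, |H x i j| ≤ C := fun x i j => (hess_bound _ i j).trans (hC x)
  have hHmem : ∀ x, H x ∈ Metric.closedBall (0 : Fin n → Fin n → ℝ) C := by
    intro x
    rw [mem_closedBall_zero_iff, pi_norm_le_iff_of_nonneg hC0]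
    intro i
    rw [pi_norm_le_iff_of_nonneg hC0]
    exact fun j => hHb x i j
  obtain ⟨lam, Lam, hlam, hLam, hell⟩ := ellipticity F hF hElliptic C
  have hquad : ∀ d x, Dd d (Dd d u) x = ∑ i, ∑ j, d i * d j * H x i j := fun d x => by
    rw [Dd2_eq_sum _ _ hu]; rfl
  have hbdd : ∀ d, BddAbove (Set.range (Dd d (Dd d u))) := by
    intro d
    refine ⟨∑ i, ∑ j, |d i * d j| * C, ?_⟩
    rintro _ ⟨x, rfl⟩
    rw [hquad]
    refine Finset.sum_le_sum fun i _ => Finset.sum_le_sum fun j _ => ?_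
    refine (le_abs_self _).trans ?_
    rw [abs_mul]
    exact mul_le_mul_of_nonneg_left (hHb x i j) (abs_nonneg _)
  set S : EuclideanSpace ℝ (Fin n) → ℝ := fun d => sSup (Set.range (Dd d (Dd d u))) with hS
  have hle : ∀ d x, Dd d (Dd d u) x ≤ S d := fun d x => le_csSup (hbdd d) ⟨x, rfl⟩
  have hsup : ∀ d, ∀ η > 0, IsSuper lam Lam (fun x => derivMatrix F (H x))
      (fun x => (S d - Dd d (Dd d u) x) + η) := by
    intro d η hη
    have e : (fun x => (S d - Dd d (Dd d u) x) + η) = fun x => (S d + η) - Dd d (Dd d u) x := by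
      ext x; ring
    rw [e]
    refine ⟨hlam, hLam, contDiff_const.sub (Dd_smooth _ (Dd_smooth _ hu)),
      fun x => (hell _ (hHmem x)).1, fun x => (hell _ (hHmem x)).2, fun x => ?_,
      ⟨η, hη, fun x => by linarith [hle d x]⟩⟩
    have := lin_super F hF hLevelConvex hu hEqn d x
    simp only [Dd_const_sub, Dd_neg, mul_neg, Finset.sum_neg_distrib]
    exact neg_nonpos.mpr this
  set d := TopologicalSpace.denseSeq (EuclideanSpace ℝ (Fin n)) with hd
  have hpts : ∀ k : ℕ, ∃ x, ∀ i : Fin k, S (d i) - Dd (d i) (Dd (d i) u) x ≤ 1 / ((k : ℝ) + 1) := by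
    intro k
    refine simul hlam hLam (fun (i : Fin k) x => S (d i) - Dd (d i) (Dd (d i) u) x)
      (fun i η hη => hsup (d i) η hη) (fun i η hη => ?_) (by positivity)
    obtain ⟨_, ⟨x, rfl⟩, hx⟩ := exists_lt_of_lt_csSup (Set.range_nonempty (Dd (d i) (Dd (d i) u)))
      (show S (d i) - η < sSup (Set.range (Dd (d i) (Dd (d i) u))) by simp only [hS]; linarith)
    exact ⟨x, by linarith⟩
  choose p hp using hpts
  obtain ⟨M, hM, φ, hφ, hlim⟩ := (isCompact_closedBall (0 : Fin n → Fin n → ℝ) C).tendsto_subseq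
    (fun k => hHmem (p k))
  have hlim_ij : ∀ i j, Filter.Tendsto (fun k => H (p (φ k)) i j) Filter.atTop (nhds (M i j)) := by
    intro i j
    have h1 := tendsto_pi_nhds.mp hlim i
    exact tendsto_pi_nhds.mp h1 j
  have hFM : F M = 0 := by
    have h1 := (hF.continuous.tendsto M).comp hlim
    have h2 : (F ∘ ((fun k => H (p k)) ∘ φ)) = fun _ => 0 := by
      ext k; exact hEqn _
    rw [h2] at h1
    exact tendsto_nhds_unique h1 tendsto_const_nhds |>.symm ▸ rfl
  have hMsymm : ∀ i j, M i j = M j i := by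
    intro i j
    refine tendsto_nhds_unique (hlim_ij i j) ?_
    refine (hlim_ij j i).congr fun k => ?_
    exact (hess_symm hu (p (φ k))).apply i j
  have hdense : ∀ m, S (d m) ≤ ∑ i, ∑ j, (d m) i * (d m) j * M i j := by
    intro m
    have h1 : Filter.Tendsto (fun k => ∑ i, ∑ j, (d m) i * (d m) j * H (p (φ k)) i j + 1 / ((φ k : ℝ) + 1))
        Filter.atTop (nhds (∑ i, ∑ j, (d m) i * (d m) j * M i j + 0)) := by
      refine Filter.Tendsto.add (tendsto_finsetSum _ fun i _ => tendsto_finsetSum _ fun j _ =>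
        (hlim_ij i j).const_mul _) ?_
      exact tendsto_one_div_add_atTop_nhds_zero_nat.comp hφ.tendsto_atTop
    rw [add_zero] at h1
    refine ge_of_tendsto h1 ?_
    filter_upwards [Filter.eventually_gt_atTop m] with k hk
    have h2 := hp (φ k) ⟨m, hk.trans_le (hφ.id_le k)⟩
    simp only [hquad] at h2
    linarith
  have hall : ∀ y (ξ : EuclideanSpace ℝ (Fin n)),
      ∑ i, ∑ j, ξ i * ξ j * H y i j ≤ ∑ i, ∑ j, ξ i * ξ j * M i j := by
    intro y
    have hcl : IsClosed {ξ : EuclideanSpace ℝ (Fin n) |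
      ∑ i, ∑ j, ξ i * ξ j * H y i j ≤ ∑ i, ∑ j, ξ i * ξ j * M i j} :=
      isClosed_le (by fun_prop) (by fun_prop)
    have hden := TopologicalSpace.denseRange_denseSeq (EuclideanSpace ℝ (Fin n))
    intro ξ
    refine hden.induction_on (p := fun ξ : EuclideanSpace ℝ (Fin n) =>
      ∑ i, ∑ j, ξ i * ξ j * H y i j ≤ ∑ i, ∑ j, ξ i * ξ j * M i j) ξ hcl fun m => ?_
    have := hle (d m) y
    rw [hquad] at this
    exact this.trans (hdense m)
  refine quad_of_const hu (Matrix.of M) fun y => ?_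
  have hyM : H y = M := by
    refine zero_of_trace F hF hlam (fun N hN => (hell N hN).1) (hHmem y) hM
      ((hEqn y).trans hFM.symm) ?_
    apply Matrix.PosSemidef.of_dotProduct_mulVec_nonneg
    · ext i j
      simp only [Matrix.conjTranspose_apply, Matrix.of_apply, Pi.sub_apply, star_trivial]
      rw [hMsymm j i]
      congr 1
      exact (hess_symm hu y).apply i j
    · intro ξ
      have h1 := hall y (WithLp.toLp 2 ξ)
      have e : star ξ ⬝ᵥ (Matrix.of (M - H y)).mulVec ξ =
          ∑ i, ∑ j, ξ i * ξ j * M i j - ∑ i, ∑ j, ξ i * ξ j * H y i j := by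
        simp only [dotProduct, Matrix.mulVec, star_trivial, Finset.mul_sum, ← Finset.sum_sub_distrib,
          Matrix.of_apply, Pi.sub_apply]
        exact Finset.sum_congr rfl fun i _ => Finset.sum_congr rfl fun j _ => by ring
      rw [e]
      exact sub_nonneg.mpr h1
  rw [← hyM]
  rfl
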